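/- arXiv:2512.09899 — 4 statements merged into one kernel-verified Lean document; each statement's English description precedes it below -/
import Mathlib

section
/- Let a and b be points in the Euclidean plane ℝ² with dist(a,b) = 2, and let L = closedBall(a,2) ∩ closedBall(b,2) be the lens of the two radius-2 disks centered at a and b. Let p, q ∈ L be two points lying on the same closed side of the line through a and b; that is, writing cross((u₁,u₂),(v₁,v₂)) = u₁v₂ − u₂v₁, assume cross(b − a, p − a) ≥ 0 and cross(b − a, q − a) ≥ 0 (or both cross products are ≤ 0). Then dist(p,q) ≤ 2. -/
/-!
Of `p` and `q`, let `p` be the one farther from the line `ab`. The lens projects onto the segment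
`ab`, so the projection `m` of `q` lies on that segment, and since `q` is on the same side as `p`
but no farther from the line, `dist p q ≤ dist p m`. By convexity of the distance to `p`,
`dist p m ≤ max (dist p a) (dist p b) ≤ 2`.

In the computation a point `r` is described by `X = ⟪b - a, r - a⟫` and
`Y = cross (b - a) (r - a)`, its coordinates in an orthogonal frame at `a` along `b - a`, scaled
by `dist a b = 2`: here `a = (0, 0)`, `b = (4, 0)`, and both disks have radius `4`.
-/

/-- The planar cross product `cross u v = u₁v₂ − u₂v₁`. -/
def cross (u v : EuclideanSpace ℝ (Fin 2)) : ℝ := u 0 * v 1 - u 1 * v 0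

/-- The half-lens bound in scaled coordinates, for `(X, Y)` at least as high as `(U, V)`. -/
lemma half_lens_of_le {X Y U V : ℝ} (hpa : X ^ 2 + Y ^ 2 ≤ 16) (hpb : (X - 4) ^ 2 + Y ^ 2 ≤ 16)
    (hqa : U ^ 2 + V ^ 2 ≤ 16) (hqb : (U - 4) ^ 2 + V ^ 2 ≤ 16) (hV : 0 ≤ V) (hVY : V ≤ Y) :
    (X - U) ^ 2 + (Y - V) ^ 2 ≤ 16 := by
  have hU4 : U ≤ 4 := by nlinarith [sq_nonneg V]
  have hU0 : 0 ≤ U := by nlinarith [sq_nonneg V]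
  have hY : (Y - V) ^ 2 ≤ Y ^ 2 := by nlinarith
  -- `(U, 0)` is the convex combination of `(0, 0)` and `(4, 0)` with weights `1 - U/4` and `U/4`.
  have hX : 4 * (X - U) ^ 2 ≤ (4 - U) * X ^ 2 + U * (X - 4) ^ 2 := by
    nlinarith [mul_nonneg hU0 (sub_nonneg.2 hU4)]
  nlinarith [mul_le_mul_of_nonneg_left hpa (sub_nonneg.2 hU4),
    mul_le_mul_of_nonneg_left hpb hU0]

lemma half_lens {X Y U V : ℝ} (hpa : X ^ 2 + Y ^ 2 ≤ 16) (hpb : (X - 4) ^ 2 + Y ^ 2 ≤ 16)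
    (hqa : U ^ 2 + V ^ 2 ≤ 16) (hqb : (U - 4) ^ 2 + V ^ 2 ≤ 16) (hY : 0 ≤ Y) (hV : 0 ≤ V) :
    (X - U) ^ 2 + (Y - V) ^ 2 ≤ 16 := by
  rcases le_total V Y with h | h
  · exact half_lens_of_le hpa hpb hqa hqb hV h
  · linarith [half_lens_of_le hqa hqb hpa hpb hY h, sub_sq_comm X U, sub_sq_comm Y V]

lemma dist_sq_plane (x y : EuclideanSpace ℝ (Fin 2)) :
    dist x y ^ 2 = (x 0 - y 0) ^ 2 + (x 1 - y 1) ^ 2 := by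
  rw [EuclideanSpace.dist_eq, Real.sq_sqrt (by positivity)]
  simp [Fin.sum_univ_two, Real.dist_eq, sq_abs]

/-- If `dist a b = 2` and `p, q` lie in the lens
`closedBall a 2 ∩ closedBall b 2` on the same closed side of the line through `a`
and `b`, then `dist p q ≤ 2`. -/
theorem stmt_5 (a b : EuclideanSpace ℝ (Fin 2)) (hab : dist a b = 2)
    (p q : EuclideanSpace ℝ (Fin 2))
    (hp : p ∈ Metric.closedBall a 2 ∩ Metric.closedBall b 2)
    (hq : q ∈ Metric.closedBall a 2 ∩ Metric.closedBall b 2)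
    (hside : (0 ≤ cross (b - a) (p - a) ∧ 0 ≤ cross (b - a) (q - a)) ∨
             (cross (b - a) (p - a) ≤ 0 ∧ cross (b - a) (q - a) ≤ 0)) :
    dist p q ≤ 2 := by
  have hd : (b 0 - a 0) ^ 2 + (b 1 - a 1) ^ 2 = 4 := by
    rw [← dist_sq_plane, dist_comm, hab]; norm_num
  have hball : ∀ {r c : EuclideanSpace ℝ (Fin 2)}, r ∈ Metric.closedBall c 2 →
      (r 0 - c 0) ^ 2 + (r 1 - c 1) ^ 2 ≤ 4 := by
    intro r c h
    rw [← dist_sq_plane]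
    nlinarith [Metric.mem_closedBall.1 h, dist_nonneg (x := r) (y := c)]
  -- Lagrange's identity: passing to scaled coordinates multiplies squared lengths by `4`.
  have lagrange : ∀ s t : ℝ, ((b 0 - a 0) * s + (b 1 - a 1) * t) ^ 2 +
      ((b 0 - a 0) * t - (b 1 - a 1) * s) ^ 2 = 4 * (s ^ 2 + t ^ 2) := by
    intro s t
    rw [← hd]; ring
  have coord_a : ∀ {r : EuclideanSpace ℝ (Fin 2)}, r ∈ Metric.closedBall a 2 →
      ((b 0 - a 0) * (r 0 - a 0) + (b 1 - a 1) * (r 1 - a 1)) ^ 2 +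
      ((b 0 - a 0) * (r 1 - a 1) - (b 1 - a 1) * (r 0 - a 0)) ^ 2 ≤ 16 := by
    intro r h
    linarith [lagrange (r 0 - a 0) (r 1 - a 1), hball h]
  have coord_b : ∀ {r : EuclideanSpace ℝ (Fin 2)}, r ∈ Metric.closedBall b 2 →
      ((b 0 - a 0) * (r 0 - a 0) + (b 1 - a 1) * (r 1 - a 1) - 4) ^ 2 +
      ((b 0 - a 0) * (r 1 - a 1) - (b 1 - a 1) * (r 0 - a 0)) ^ 2 ≤ 16 := by
    intro r h
    have h1 := lagrange (r 0 - b 0) (r 1 - b 1)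
    have h2 : (b 0 - a 0) * (r 0 - b 0) + (b 1 - a 1) * (r 1 - b 1) =
        (b 0 - a 0) * (r 0 - a 0) + (b 1 - a 1) * (r 1 - a 1) - 4 := by
      rw [← hd]; ring
    have h3 : (b 0 - a 0) * (r 1 - b 1) - (b 1 - a 1) * (r 0 - b 0) =
        (b 0 - a 0) * (r 1 - a 1) - (b 1 - a 1) * (r 0 - a 0) := by ring
    rw [h2, h3] at h1
    linarith [hball h]
  have key : ((b 0 - a 0) * (p 0 - a 0) + (b 1 - a 1) * (p 1 - a 1) -
      ((b 0 - a 0) * (q 0 - a 0) + (b 1 - a 1) * (q 1 - a 1))) ^ 2 +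
      ((b 0 - a 0) * (p 1 - a 1) - (b 1 - a 1) * (p 0 - a 0) -
      ((b 0 - a 0) * (q 1 - a 1) - (b 1 - a 1) * (q 0 - a 0))) ^ 2 ≤ 16 := by
    have pa := coord_a hp.1
    have pb := coord_b hp.2
    have qa := coord_a hq.1
    have qb := coord_b hq.2
    simp only [cross, PiLp.sub_apply] at hside
    rcases hside with ⟨h1, h2⟩ | ⟨h1, h2⟩
    · exact half_lens pa pb qa qb h1 h2
    -- Reflecting in the line `ab` negates the second coordinate.
    · rw [← neg_sq (_ - _ * (p 0 - a 0))] at pa pb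
      rw [← neg_sq (_ - _ * (q 0 - a 0))] at qa qb
      linarith [half_lens pa pb qa qb (neg_nonneg.2 h1) (neg_nonneg.2 h2)]
  have hl := lagrange (p 0 - q 0) (p 1 - q 1)
  rw [← dist_sq_plane] at hl
  have hsq : dist p q ^ 2 ≤ 2 ^ 2 := by linarith
  exact (sq_le_sq₀ dist_nonneg (by norm_num)).1 hsq
end

section
/- Let p₁, p₂ be distinct points of the Euclidean plane ℝ² with dist(p₁,p₂) ≤ 2, and let x = p₂ + 2·(p₁ − p₂)/‖p₁ − p₂‖ be the point at distance 2 from p₂ on the ray from p₂ through p₁. Then every point q ∈ ℝ² satisfying dist(p₂, q) ≤ 2 and dist(p₁, q) ≤ dist(p₁, p₂) lies in the lens closedBall(x, 2) ∩ closedBall(p₂, 2). -/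
/-- Let `p₁ ≠ p₂` in the Euclidean plane with `dist p₁ p₂ ≤ 2` and
let `x = p₂ + 2·(p₁ − p₂)/‖p₁ − p₂‖` be the point at distance `2` from `p₂` on the ray
from `p₂` through `p₁`. Then every point `q` with `dist p₂ q ≤ 2` and
`dist p₁ q ≤ dist p₁ p₂` lies in the lens `closedBall x 2 ∩ closedBall p₂ 2`. -/
theorem stmt_7 (p₁ p₂ : EuclideanSpace ℝ (Fin 2)) (hne : p₁ ≠ p₂)
    (hd : dist p₁ p₂ ≤ 2)
    (x : EuclideanSpace ℝ (Fin 2))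
    (hx : x = p₂ + (2 / ‖p₁ - p₂‖) • (p₁ - p₂)) :
    ∀ q : EuclideanSpace ℝ (Fin 2), dist p₂ q ≤ 2 → dist p₁ q ≤ dist p₁ p₂ →
      q ∈ Metric.closedBall x 2 ∩ Metric.closedBall p₂ 2 := by
  intro q hq₂ hq₁
  rw [dist_eq_norm p₁ p₂] at hd hq₁
  have hpos : 0 < ‖p₁ - p₂‖ := norm_pos_iff.mpr (sub_ne_zero.mpr hne)
  -- `p₁` lies on the segment from `p₂` to `x`, since `‖p₁ - p₂‖ ≤ 2`; hence the disk around
  -- `p₁` through `p₂` is contained in the disk around `x` through `p₂`.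
  have hxp : dist p₁ x = 2 - ‖p₁ - p₂‖ := by
    have hv : x - p₁ = (2 / ‖p₁ - p₂‖ - 1) • (p₁ - p₂) := by
      rw [hx]; module
    have hc : 0 ≤ 2 / ‖p₁ - p₂‖ - 1 := by
      rw [sub_nonneg, le_div_iff₀ hpos, one_mul]
      exact hd
    rw [dist_comm, dist_eq_norm, hv, norm_smul, Real.norm_of_nonneg hc]
    field_simp
  refine ⟨?_, ?_⟩
  · rw [Metric.mem_closedBall]
    linarith [dist_triangle q p₁ x, dist_comm q p₁]
  · rwa [Metric.mem_closedBall, dist_comm]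
end

section
/- Let o, cᵢ, cⱼ be points of the Euclidean plane ℝ² and let r₁, rᵢ, rⱼ be positive real numbers with r₁ ≤ rᵢ and r₁ ≤ rⱼ. Suppose dist(o, cᵢ) ≤ r₁ + rᵢ, dist(o, cⱼ) ≤ r₁ + rⱼ, and the unoriented angle ∠ cᵢ o cⱼ is at most π/3. Then dist(cᵢ, cⱼ) ≤ rᵢ + rⱼ; that is, the disks D(cᵢ, rᵢ) and D(cⱼ, rⱼ) intersect. -/
/-!
Since `cos ∠ ci o cj ≥ 1/2`, the law of cosines with `a = dist ci o` and `b = dist cj o` gives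
`dist ci cj ^ 2 ≤ a² + b² - a b ≤ max a b ^ 2`: the side opposite an angle of at most `π/3` is
not longer than the longest other side. Both `a` and `b` are at most `ri + rj`, because `r₁` is
at most each of `ri`, `rj`.
-/

open EuclideanGeometry

/-- If disks `D(cᵢ, rᵢ)` and `D(cⱼ, rⱼ)`, of radii at least `r₁ > 0`,
both intersect `D(o, r₁)` and the unoriented angle `∠ cᵢ o cⱼ` is at most `π/3`, then
the two disks intersect: `dist cᵢ cⱼ ≤ rᵢ + rⱼ`. -/
theorem stmt_9 (o ci cj : EuclideanSpace ℝ (Fin 2)) (r₁ ri rj : ℝ)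
    (hr₁ : 0 < r₁) (hri : 0 < ri) (hrj : 0 < rj)
    (h₁i : r₁ ≤ ri) (h₁j : r₁ ≤ rj)
    (hoi : dist o ci ≤ r₁ + ri) (hoj : dist o cj ≤ r₁ + rj)
    (hangle : ∠ ci o cj ≤ Real.pi / 3) :
    dist ci cj ≤ ri + rj := by
  have hcos : 1 / 2 ≤ Real.cos (∠ ci o cj) := by
    rw [← Real.cos_pi_div_three]
    exact Real.cos_le_cos_of_nonneg_of_le_pi (angle_nonneg _ _ _)
      (by linarith [Real.pi_pos]) hangle
  have hlaw := law_cos ci o cj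
  rw [dist_comm o ci] at hoi
  rw [dist_comm o cj] at hoj
  have ha : 0 ≤ dist ci o := dist_nonneg
  have hb : 0 ≤ dist cj o := dist_nonneg
  have hab := mul_le_mul_of_nonneg_left hcos (mul_nonneg ha hb)
  refine abs_le_of_sq_le_sq' ?_ (by positivity) |>.2
  rcases le_total (dist ci o) (dist cj o) with h | h
  · have h1 := mul_le_mul_of_nonneg_left h ha
    have h2 : dist cj o ^ 2 ≤ (ri + rj) ^ 2 := pow_le_pow_left₀ hb (by linarith) 2
    nlinarith
  · have h1 := mul_le_mul_of_nonneg_left h hb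
    have h2 : dist ci o ^ 2 ≤ (ri + rj) ^ 2 := pow_le_pow_left₀ ha (by linarith) 2
    nlinarith
end

section
/- Let o be a point of the Euclidean plane ℝ², let r₁ > 0, and let a finite family of disks be given by an index set I with centers c : I → ℝ² and radii r : I → ℝ such that r₁ ≤ r(i) and dist(o, c(i)) ≤ r₁ + r(i) for every i ∈ I (i.e., every disk of the family intersects the disk D(o, r₁) and has radius at least r₁). Then there exists a subset S ⊆ I with 6·|S| ≥ |I| such that for all i, j ∈ S, dist(c(i), c(j)) ≤ r(i) + r(j), i.e., the disks indexed by S pairwise intersect. -/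
/-!
Two points of a closed cone of angle `π/3` with apex `o` are at distance at most the larger of their
distances to `o`. If these points are centers `c i`, `c j` of disks of the family, that larger
distance is at most `r₁ + r i` or `r₁ + r j`, hence at most `r i + r j`, since all radii are at
least `r₁`. So the disks with centers in one cone pairwise intersect. Six such cones cover the
plane, and by pigeonhole one of them contains at least a sixth of the centers.

The cones are handled in the coordinates `(p, q)` with respect to two unit vectors at angle `π/3`,
where the squared norm is `p² + pq + q²`. Each cone consists of the points with nonnegative
coordinates in a suitably rotated basis of this kind (`coneFst`, `coneSnd`).
-/

/-- First coordinate of the point `(p, q)` in the hexagonal basis rotated by `k · π/3`. -/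
def coneFst (k : Fin 6) (p q : ℝ) : ℝ := ![p, p + q, q, -p, -p - q, -q] k

/-- Second coordinate of the point `(p, q)` in the hexagonal basis rotated by `k · π/3`. -/
def coneSnd (k : Fin 6) (p q : ℝ) : ℝ := ![q, -p, -p - q, -q, p, p + q] k

theorem exists_cone (p q : ℝ) : ∃ k, 0 ≤ coneFst k p q ∧ 0 ≤ coneSnd k p q := by
  by_contra! h
  have h0 := h 0
  have h1 := h 1
  have h2 := h 2
  have h3 := h 3
  have h4 := h 4
  have h5 := h 5
  simp [coneFst, coneSnd] at h0 h1 h2 h3 h4 h5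
  grind

/-- Within the basic cone, the squared distance (left) is at most the larger squared norm: the
inner product is at least half the product of the norms. -/
theorem hex_dist_le_of_nonneg {p q s t M : ℝ} (hp : 0 ≤ p) (hq : 0 ≤ q) (hpb : 0 ≤ s)
    (hqb : 0 ≤ t) (h : p ^ 2 + p * q + q ^ 2 ≤ M) (hb : s ^ 2 + s * t + t ^ 2 ≤ M) :
    (p - s) ^ 2 + (p - s) * (q - t) + (q - t) ^ 2 ≤ M := by
  -- `T` is twice the inner product, `N` and `N₂` are the squared norms; the squared distance is
  -- `N + N₂ - T`.
  set N := p ^ 2 + p * q + q ^ 2 with hN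
  set N₂ := s ^ 2 + s * t + t ^ 2 with hN'
  set T := 2 * p * s + p * t + q * s + 2 * q * t with hT
  have hT0 : 0 ≤ T := by positivity
  have key : N * N₂ ≤ T ^ 2 := by
    have : T ^ 2 - N * N₂ = 3 * (p * s) ^ 2 + 3 * (q * t) ^ 2 + 3 * p ^ 2 * s * t
        + 3 * p * q * s ^ 2 + 9 * (p * q * s * t) + 3 * p * q * t ^ 2
        + 3 * q ^ 2 * s * t := by
      rw [hT, hN, hN']; ring
    have : 0 ≤ T ^ 2 - N * N₂ := by rw [this]; positivity
    linarith
  have hd : (p - s) ^ 2 + (p - s) * (q - t) + (q - t) ^ 2 = N + N₂ - T := by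
    rw [hT, hN, hN']; ring
  have hmin : N ≤ T ∨ N₂ ≤ T := by
    by_contra! hc
    nlinarith [hc.1, hc.2]
  rw [hd]
  rcases hmin with h1 | h1 <;> linarith

theorem hex_dist_le_of_cone (k : Fin 6) {p q s t M : ℝ}
    (hp : 0 ≤ coneFst k p q) (hq : 0 ≤ coneSnd k p q)
    (hpb : 0 ≤ coneFst k s t) (hqb : 0 ≤ coneSnd k s t)
    (h : p ^ 2 + p * q + q ^ 2 ≤ M) (hb : s ^ 2 + s * t + t ^ 2 ≤ M) :
    (p - s) ^ 2 + (p - s) * (q - t) + (q - t) ^ 2 ≤ M := by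
  -- The change of coordinates is a rotation, so it preserves the norm form.
  have inv : ∀ a b : ℝ, coneFst k a b ^ 2 + coneFst k a b * coneSnd k a b + coneSnd k a b ^ 2
      = a ^ 2 + a * b + b ^ 2 := by
    intro a b
    fin_cases k <;> simp [coneFst, coneSnd] <;> ring
  have lin1 : coneFst k (p - s) (q - t) = coneFst k p q - coneFst k s t := by
    fin_cases k <;> simp [coneFst] <;> ring
  have lin2 : coneSnd k (p - s) (q - t) = coneSnd k p q - coneSnd k s t := by
    fin_cases k <;> simp [coneSnd] <;> ring
  rw [← inv] at h hb ⊢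
  rw [lin1, lin2]
  exact hex_dist_le_of_nonneg hp hq hpb hqb h hb

/-- First hexagonal coordinate of a vector, with respect to the unit vectors at angles `0` and
`π/3`. -/
noncomputable def hexFst (v : EuclideanSpace ℝ (Fin 2)) : ℝ := v 0 - v 1 / √3

/-- Second hexagonal coordinate of a vector, with respect to the unit vectors at angles `0` and
`π/3`. -/
noncomputable def hexSnd (v : EuclideanSpace ℝ (Fin 2)) : ℝ := 2 * (v 1 / √3)

theorem hex_norm_sq (v : EuclideanSpace ℝ (Fin 2)) :
    hexFst v ^ 2 + hexFst v * hexSnd v + hexSnd v ^ 2 = ‖v‖ ^ 2 := by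
  have h3 : (√3 : ℝ) ^ 2 = 3 := Real.sq_sqrt (by norm_num)
  have hv : (v 1) ^ 2 = 3 * (v 1 / √3) ^ 2 := by
    rw [div_pow, h3]; ring
  rw [EuclideanSpace.norm_sq_eq, Fin.sum_univ_two, Real.norm_eq_abs, Real.norm_eq_abs, sq_abs,
    sq_abs, hv, hexFst, hexSnd]
  ring

theorem norm_sub_le_of_cone (k : Fin 6) {u v : EuclideanSpace ℝ (Fin 2)} {M : ℝ}
    (hu : 0 ≤ coneFst k (hexFst u) (hexSnd u) ∧ 0 ≤ coneSnd k (hexFst u) (hexSnd u))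
    (hv : 0 ≤ coneFst k (hexFst v) (hexSnd v) ∧ 0 ≤ coneSnd k (hexFst v) (hexSnd v))
    (huM : ‖u‖ ≤ M) (hvM : ‖v‖ ≤ M) : ‖u - v‖ ≤ M := by
  have hM : 0 ≤ M := (norm_nonneg u).trans huM
  have h1 : hexFst (u - v) = hexFst u - hexFst v := by
    simp [hexFst]; ring
  have h2 : hexSnd (u - v) = hexSnd u - hexSnd v := by
    simp [hexSnd]; ring
  refine le_of_sq_le_sq ?_ hM
  rw [← hex_norm_sq, h1, h2]
  apply hex_dist_le_of_cone k hu.1 hu.2 hv.1 hv.2 <;> rw [hex_norm_sq] <;> gcongr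

/-- If every disk of a finite family (centers `c i`, radii `r i ≥ r₁`)
intersects the disk `D(o, r₁)` with `r₁ > 0`, then there is a subfamily `S` with
`6·|S| ≥ |I|` whose disks pairwise intersect. -/
theorem stmt_10 {I : Type*} [Fintype I] (o : EuclideanSpace ℝ (Fin 2)) (r₁ : ℝ)
    (hr₁ : 0 < r₁) (c : I → EuclideanSpace ℝ (Fin 2)) (r : I → ℝ)
    (hr : ∀ i, r₁ ≤ r i) (hint : ∀ i, dist o (c i) ≤ r₁ + r i) :
    ∃ S : Finset I, 6 * S.card ≥ Fintype.card I ∧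
      ∀ i ∈ S, ∀ j ∈ S, dist (c i) (c j) ≤ r i + r j := by
  choose f hf using fun i => exists_cone (hexFst (c i - o)) (hexSnd (c i - o))
  obtain ⟨k, hk⟩ := Fintype.exists_le_card_fiber_of_nsmul_le_card f
    (b := (Fintype.card I : ℚ) / 6) (by simp; linarith)
  refine ⟨Finset.univ.filter fun i => f i = k, ?_, ?_⟩
  · have : (Fintype.card I : ℚ) ≤ 6 * (Finset.univ.filter fun i => f i = k).card := by linarith
    exact_mod_cast this
  · intro i hi j hj
    have hi : f i = k := by simpa using hi
    have hj : f j = k := by simpa using hj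
    have hb : ∀ l, ‖c l - o‖ ≤ r₁ + r l := fun l => by
      rw [← dist_eq_norm, dist_comm]; exact hint l
    rw [dist_eq_norm, ← sub_sub_sub_cancel_right (c i) (c j) o]
    exact norm_sub_le_of_cone k (hi ▸ hf i) (hj ▸ hf j)
      (by linarith [hb i, hr j]) (by linarith [hb j, hr i])
end
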